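/- arXiv:1308.3316 — 2 statements merged into one kernel-verified Lean document; each statement's English description precedes it below -/
import Mathlib

section
/- For every integer n ≥ 2, D_±(C_2 ⊕ C_{2n}) = ⌊log₂(4n)⌋ + 1. -/
open Finset

/-- A sequence `g` over `G` has an `A`-weighted zero-subsum: there is a nonempty
index set `I` and weights `a i ∈ A` for `i ∈ I` with `∑ i ∈ I, a i • g i = 0`. -/
def HasWZS (A : Set ℤ) {G : Type*} [AddCommGroup G] {ℓ : ℕ} (g : Fin ℓ → G) : Prop :=
  ∃ (I : Finset (Fin ℓ)) (a : Fin ℓ → ℤ), I.Nonempty ∧ (∀ i ∈ I, a i ∈ A) ∧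
    ∑ i ∈ I, a i • g i = 0

/-- The `A`-weighted Davenport constant of `G`: the smallest `ℓ` such that every
sequence of length `ℓ` over `G` has an `A`-weighted zero-subsum. -/
noncomputable def DavW (A : Set ℤ) (G : Type*) [AddCommGroup G] : ℕ :=
  sInf {ℓ : ℕ | ∀ g : Fin ℓ → G, HasWZS A g}

/-- The plus-minus weighted Davenport constant. -/
noncomputable def Davpm (G : Type*) [AddCommGroup G] : ℕ :=
  DavW ({1, -1} : Set ℤ) G

/-!
A sequence of length `ℓ` has `2 ^ ℓ` subsums; if `|G| < 2 ^ ℓ`, two of them agree, and their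
difference is a plus-minus weighted zero-subsum, so `D_±(G) ≤ ⌊log₂ |G|⌋ + 1`.

Conversely, lifting a sequence without zero-subsum from a quotient `H` of `G` and prepending such a
sequence from the kernel gives one in `G`, so `D_± - 1` is superadditive along extensions.
If `x` has order `m`, the sequence `x, 2x, 4x, …` of length `⌊log₂ m⌋` has no zero-subsum: a
nonempty signed sum of distinct powers of `2` is nonzero and smaller in absolute value than `m`.
Peeling off subgroups of order `2` reaches `log₂ |P|` for a `2`-group `P`, so extending by a
cyclic group loses nothing against the pigeonhole bound.
-/

section WeightedZeroSubsum

variable {A : Set ℤ} {G H K : Type*} [AddCommGroup G] [AddCommGroup H] [AddCommGroup K] {ℓ m n : ℕ}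

lemma not_hasWZS_fin_zero (g : Fin 0 → G) : ¬HasWZS A g := by
  rintro ⟨I, -, ⟨i, -⟩, -⟩
  exact i.elim0

lemma HasWZS.of_comp_embedding {g : Fin ℓ → G} (f : Fin m ↪ Fin ℓ) (hg : HasWZS A (g ∘ f)) :
    HasWZS A g := by
  obtain ⟨I, a, hI, ha, hsum⟩ := hg
  refine ⟨I.map f, Function.extend f a 0, hI.map, ?_, ?_⟩
  · simpa [f.injective.extend_apply] using ha
  · simpa [f.injective.extend_apply] using hsum

lemma sum_eq_sum_castAdd_add_sum_natAdd {M : Type*} [AddCommMonoid M] (I : Finset (Fin (m + n)))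
    (f : Fin (m + n) → M) :
    ∑ i ∈ I, f i = ∑ i with Fin.castAdd n i ∈ I, f (Fin.castAdd n i) +
      ∑ j with Fin.natAdd m j ∈ I, f (Fin.natAdd m j) := by
  simp only [sum_filter, ← Fin.sum_univ_add fun i ↦ if i ∈ I then f i else 0, sum_ite_mem,
    univ_inter]

lemma HasWZS.of_append {ι : K →+ G} {π : G →+ H} (hι : Function.Injective ι)
    (hπι : π.comp ι = 0) {g : Fin m → K} {h : Fin n → G}
    (hgh : HasWZS A (Fin.append (ι ∘ g) h)) : HasWZS A g ∨ HasWZS A (π ∘ h) := by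
  obtain ⟨I, a, hI, ha, hsum⟩ := hgh
  rw [sum_eq_sum_castAdd_add_sum_natAdd] at hsum
  simp only [Fin.append_left, Fin.append_right, Function.comp_apply] at hsum
  by_cases hJ : ∃ j, Fin.natAdd m j ∈ I
  · right
    obtain ⟨j, hj⟩ := hJ
    have hπ : ∀ x, π (ι x) = 0 := DFunLike.congr_fun hπι
    exact ⟨({j | Fin.natAdd m j ∈ I} : Finset (Fin n)), a ∘ Fin.natAdd m, ⟨j, by simpa using hj⟩,
      fun i hi ↦ ha _ (by simpa using hi), by simpa [hπ] using congrArg π hsum⟩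
  · left
    push Not at hJ
    obtain ⟨i, hi⟩ : ∃ i, Fin.castAdd n i ∈ I := by
      obtain ⟨i, hi⟩ := hI
      induction i using Fin.addCases with
      | left i => exact ⟨i, hi⟩
      | right j => exact absurd hi (hJ j)
    refine ⟨({i | Fin.castAdd n i ∈ I} : Finset (Fin m)), a ∘ Fin.castAdd n, ⟨i, by simpa using hi⟩,
      fun i hi ↦ ha _ (by simpa using hi), hι ?_⟩
    simpa [hJ] using hsum

lemma lt_davW_iff (hm : ∀ g : Fin m → G, HasWZS A g) :
    ℓ < DavW A G ↔ ∃ g : Fin ℓ → G, ¬HasWZS A g := by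
  refine ⟨fun hℓ ↦ by simpa using Nat.notMem_of_lt_sInf hℓ, ?_⟩
  rintro ⟨g, hg⟩
  by_contra! hℓ
  have hD : ∀ g : Fin (DavW A G) → G, HasWZS A g :=
    Nat.sInf_mem (s := {ℓ | ∀ g : Fin ℓ → G, HasWZS A g}) ⟨m, hm⟩
  exact hg ((hD _).of_comp_embedding (Fin.castLEEmb hℓ))

end WeightedZeroSubsum

section PlusMinus

variable {G H K : Type*} [AddCommGroup G] [AddCommGroup H] [AddCommGroup K] {ℓ : ℕ}

lemma hasWZS_of_sum_eq_sum {g : Fin ℓ → G} {S T : Finset (Fin ℓ)} (hne : S ≠ T)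
    (hsum : ∑ i ∈ S, g i = ∑ i ∈ T, g i) : HasWZS {1, -1} g := by
  refine ⟨symmDiff S T, fun i ↦ if i ∈ S then 1 else -1, by simpa [nonempty_iff_ne_empty], ?_, ?_⟩
  · intro i _
    by_cases hi : i ∈ S <;> simp [hi]
  · have hS : ∑ i ∈ S \ T, (if i ∈ S then (1 : ℤ) else -1) • g i = ∑ i ∈ S \ T, g i :=
      sum_congr rfl fun i hi ↦ by simp [(mem_sdiff.1 hi).1]
    have hT : ∑ i ∈ T \ S, (if i ∈ S then (1 : ℤ) else -1) • g i = -∑ i ∈ T \ S, g i := by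
      rw [← sum_neg_distrib]
      exact sum_congr rfl fun i hi ↦ by simp [(mem_sdiff.1 hi).2]
    rw [symmDiff_def, sup_eq_union, sum_union disjoint_sdiff_sdiff, hS, hT, ← sub_eq_add_neg,
      sum_sdiff_sub_sum_sdiff, hsum, sub_self]

lemma hasWZS_of_natCard_lt_two_pow [Finite G] (hG : Nat.card G < 2 ^ ℓ) (g : Fin ℓ → G) :
    HasWZS {1, -1} g := by
  have := Fintype.ofFinite G
  obtain ⟨S, T, hne, hsum⟩ := Fintype.exists_ne_map_eq_of_card_lt
    (fun S : Finset (Fin ℓ) ↦ ∑ i ∈ S, g i) (by simpa [Nat.card_eq_fintype_card] using hG)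
  exact hasWZS_of_sum_eq_sum hne hsum

variable (G) in
lemma davpm_le_log_natCard_add_one [Finite G] : Davpm G ≤ Nat.log 2 (Nat.card G) + 1 :=
  Nat.sInf_le (hasWZS_of_natCard_lt_two_pow (Nat.lt_pow_succ_log_self one_lt_two _))

lemma lt_davpm_iff [Finite G] : ℓ < Davpm G ↔ ∃ g : Fin ℓ → G, ¬HasWZS {1, -1} g :=
  lt_davW_iff (hasWZS_of_natCard_lt_two_pow (Nat.lt_pow_succ_log_self one_lt_two _))

lemma davpm_pos [Finite G] : 0 < Davpm G :=
  lt_davpm_iff.2 ⟨0, not_hasWZS_fin_zero _⟩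

lemma add_lt_davpm_of_extension [Finite G] {ι : K →+ G} {π : G →+ H}
    (hι : Function.Injective ι) (hπ : Function.Surjective π) (hπι : π.comp ι = 0) {p q : ℕ}
    (hp : p < Davpm K) (hq : q < Davpm H) : p + q < Davpm G := by
  have := Finite.of_injective ι hι
  have := Finite.of_surjective π hπ
  obtain ⟨g, hg⟩ := lt_davpm_iff.1 hp
  obtain ⟨h, hh⟩ := lt_davpm_iff.1 hq
  obtain ⟨h, rfl⟩ := hπ.comp_left h
  exact lt_davpm_iff.2 ⟨Fin.append (ι ∘ g) h, fun hgh ↦ (hgh.of_append hι hπι).elim hg hh⟩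

end PlusMinus

section PowersOfTwo

lemma log_pow_mul {b : ℕ} (hb : 1 < b) (k : ℕ) {n : ℕ} (hn : n ≠ 0) :
    Nat.log b (b ^ k * n) = k + Nat.log b n := by
  induction k with
  | zero => simp
  | succ k ih =>
    rw [pow_succ, mul_right_comm, Nat.log_mul_base hb (by positivity), ih, add_right_comm]

lemma sum_mul_two_pow_ne_zero {α : Type*} {I : Finset α} (hI : I.Nonempty) {e : α → ℕ}
    (he : Set.InjOn e I) {a : α → ℤ} (ha : ∀ i ∈ I, Odd (a i)) :
    ∑ i ∈ I, a i * 2 ^ e i ≠ 0 := by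
  classical
  intro hsum
  obtain ⟨k, hk, hmin⟩ := I.exists_min_image e hI
  have hrest : (2 : ℤ) ^ (e k + 1) ∣ ∑ i ∈ I.erase k, a i * 2 ^ e i := by
    refine dvd_sum fun i hi ↦ Dvd.dvd.mul_left (pow_dvd_pow _ ?_) _
    obtain ⟨hik, hi⟩ := mem_erase.1 hi
    exact (hmin i hi).lt_of_ne fun h ↦ hik (he hi hk h.symm)
  have hlead : (2 : ℤ) * 2 ^ e k ∣ a k * 2 ^ e k := by
    rw [← add_sum_erase I _ hk] at hsum
    rwa [← pow_succ', eq_neg_of_add_eq_zero_left hsum, dvd_neg]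
  have : (2 : ℤ) ∣ a k := (mul_dvd_mul_iff_right (pow_ne_zero _ two_ne_zero)).1 hlead
  exact Int.not_even_iff_odd.2 (ha k hk) (even_iff_two_dvd.2 this)

lemma abs_sum_mul_two_pow_lt {α : Type*} {I : Finset α} {e : α → ℕ} (he : Set.InjOn e I) {ℓ : ℕ}
    (hℓ : ∀ i ∈ I, e i < ℓ) {a : α → ℤ} (ha : ∀ i ∈ I, |a i| ≤ 1) :
    |∑ i ∈ I, a i * 2 ^ e i| < 2 ^ ℓ := by
  have hgeom : ∑ i ∈ I, 2 ^ e i < 2 ^ ℓ := by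
    rw [← sum_image (f := (2 ^ ·)) he]
    exact Nat.geomSum_lt le_rfl (by simpa using hℓ)
  calc |∑ i ∈ I, a i * 2 ^ e i|
      ≤ ∑ i ∈ I, |a i * 2 ^ e i| := abs_sum_le_sum_abs _ _
    _ ≤ ∑ i ∈ I, 2 ^ e i := sum_le_sum fun i hi ↦ by
        rw [abs_mul, abs_pow, abs_two]
        exact mul_le_of_le_one_left (by positivity) (ha i hi)
    _ < 2 ^ ℓ := by exact_mod_cast hgeom

variable {G C : Type*} [AddCommGroup G] [AddCommGroup C]

lemma not_hasWZS_two_pow_nsmul {x : G} {ℓ : ℕ} (hx : 2 ^ ℓ ≤ addOrderOf x) :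
    ¬HasWZS {1, -1} fun i : Fin ℓ ↦ 2 ^ (i : ℕ) • x := by
  rintro ⟨I, a, hI, ha, hsum⟩
  have hsmul : (∑ i ∈ I, a i * 2 ^ (i : ℕ)) • x = 0 := by
    rw [← hsum, sum_smul]
    refine sum_congr rfl fun i _ ↦ ?_
    simp [mul_smul, ← natCast_zsmul]
  have ha' : ∀ i ∈ I, a i = 1 ∨ a i = -1 := ha
  have habs : |∑ i ∈ I, a i * 2 ^ (i : ℕ)| < 2 ^ ℓ :=
    abs_sum_mul_two_pow_lt Fin.val_injective.injOn (fun i _ ↦ i.isLt)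
      fun i hi ↦ by rcases ha' i hi with h | h <;> simp [h]
  have hodd : ∀ i ∈ I, Odd (a i) := fun i hi ↦ by rcases ha' i hi with h | h <;> simp [h]
  refine sum_mul_two_pow_ne_zero hI Fin.val_injective.injOn hodd ?_
  exact Int.eq_zero_of_abs_lt_dvd (addOrderOf_dvd_iff_zsmul_eq_zero.2 hsmul)
    (habs.trans_le (by exact_mod_cast hx))

lemma log_addOrderOf_lt_davpm [Finite G] (x : G) : Nat.log 2 (addOrderOf x) < Davpm G :=
  lt_davpm_iff.2
    ⟨_, not_hasWZS_two_pow_nsmul (Nat.pow_log_le_self 2 (addOrderOf_pos x).ne')⟩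

variable (C) in
lemma log_natCard_lt_davpm_of_isAddCyclic [Finite C] [IsAddCyclic C] :
    Nat.log 2 (Nat.card C) < Davpm C := by
  obtain ⟨x, hx⟩ := IsAddCyclic.exists_generator (α := C)
  simpa only [addOrderOf_eq_card_of_forall_mem_zmultiples hx] using log_addOrderOf_lt_davpm x

lemma lt_davpm_of_two_pow_dvd_natCard [Finite G] {k : ℕ} (hk : 2 ^ k ∣ Nat.card G) :
    k < Davpm G := by
  induction k generalizing G with
  | zero => exact davpm_pos
  | succ k ih =>
    obtain ⟨x, hx⟩ := exists_prime_addOrderOf_dvd_card' (G := G) 2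
      ((dvd_pow_self 2 k.succ_ne_zero).trans hk)
    let N := AddSubgroup.zmultiples x
    have hN : 1 < Davpm N := by
      have h := log_natCard_lt_davpm_of_isAddCyclic N
      have hlog : Nat.log 2 2 = 1 := Nat.log_pow one_lt_two 1
      rwa [Nat.card_zmultiples, hx, hlog] at h
    have hquot : 2 ^ k ∣ Nat.card (G ⧸ N) := by
      rw [N.card_eq_card_quotient_mul_card_addSubgroup, Nat.card_zmultiples, hx, pow_succ] at hk
      exact Nat.dvd_of_mul_dvd_mul_right two_pos hk
    rw [add_comm]
    exact add_lt_davpm_of_extension N.subtype_injective (QuotientAddGroup.mk'_surjective N)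
      (by ext y; simp) hN (ih hquot)

end PowersOfTwo

theorem stmt16_general {P C : Type*} [AddCommGroup P] [AddCommGroup C] [Finite C] [IsAddCyclic C]
    {k : ℕ} (hP : Nat.card P = 2 ^ k) :
    (Davpm (P × C) : ℤ) = ⌊Real.logb 2 (Nat.card (P × C))⌋ + 1 := by
  have : Finite P := Nat.finite_of_card_ne_zero (by simp [hP])
  have hlower : Nat.log 2 (Nat.card (P × C)) < Davpm (P × C) := by
    rw [Nat.card_prod, hP, log_pow_mul one_lt_two k Nat.card_pos.ne']
    exact add_lt_davpm_of_extension (ι := .inl P C) (π := .snd P C) (Prod.mk_left_injective 0)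
      Prod.snd_surjective AddMonoidHom.snd_comp_inl
      (lt_davpm_of_two_pow_dvd_natCard hP.symm.dvd) (log_natCard_lt_davpm_of_isAddCyclic C)
  have hD : Davpm (P × C) = Nat.log 2 (Nat.card (P × C)) + 1 :=
    (davpm_le_log_natCard_add_one (P × C)).antisymm hlower
  have hfloor := Real.floor_logb_natCast (b := 2) (Nat.cast_nonneg (Nat.card (P × C)))
  rw [Int.log_natCast, Nat.cast_ofNat] at hfloor
  rw [hD, hfloor, Nat.cast_add_one]

theorem stmt16 (n : ℕ) (hn : 2 ≤ n) :
    (Davpm (ZMod 2 × ZMod (2 * n)) : ℤ) = ⌊Real.logb 2 (4 * (n : ℝ))⌋ + 1 := by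
  have : NeZero (2 * n) := ⟨by omega⟩
  simpa [← mul_assoc] using stmt16_general (P := ZMod 2) (C := ZMod (2 * n)) (k := 1) (by simp)
end

section
/- For every integer n ≥ 2, D_±(C_4 ⊕ C_{4n}) = ⌊log₂(16n)⌋ + 1. -/
open Finset

/-!
A sequence has no plus-minus weighted zero-subsum exactly when its subset sums are pairwise
distinct: a coincidence between the sums over `S` and `T` is a zero-subsum supported on `S ∆ T`,
and conversely the two sign classes of a zero-subsum have equal sums. Counting the `2 ^ ℓ` subsets
gives `Davpm G ≤ ⌊log₂ |G|⌋ + 1`. By uniqueness of binary expansions `1, 2, …, 2 ^ (k - 1)` has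
distinct subset sums modulo any `N ≥ 2 ^ k`, and distinctness of subset sums passes to the union
of sequences in the two factors of a product, so `⌊log₂ a⌋ + ⌊log₂ b⌋ < Davpm (ZMod a × ZMod b)`.
The two bounds meet as soon as one of `a`, `b` is a power of two.
-/

open Function

theorem natLog_pow_mul {b m : ℕ} (hb : 1 < b) (hm : m ≠ 0) (k : ℕ) :
    Nat.log b (b ^ k * m) = k + Nat.log b m := by
  induction k with
  | zero => simp
  | succ k ih =>
    have : b ^ k * m ≠ 0 := by positivity
    rw [pow_succ, mul_right_comm, Nat.log_mul_base hb this, ih, add_right_comm]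

/-- A family is dissociated if its subset sums are pairwise distinct. This is the analogue of
`AddDissociated` for indexed families, so that repeated terms are taken into account. -/
def IsDissociated {ι G : Type*} [AddCommMonoid G] (g : ι → G) : Prop :=
  Injective fun S : Finset ι ↦ ∑ i ∈ S, g i

namespace IsDissociated

variable {ι κ G H : Type*} [AddCommMonoid G] [AddCommMonoid H] {g : ι → G} {h : κ → H}

theorem comp_embedding (hg : IsDissociated g) (f : κ ↪ ι) : IsDissociated (g ∘ f) := by
  intro S T hST
  apply map_injective f
  apply hg
  simpa only [sum_map, comp_apply] using hST

theorem prod (hg : IsDissociated g) (hh : IsDissociated h) :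
    IsDissociated (Sum.elim (fun i ↦ (g i, 0)) fun j ↦ (0, h j) : ι ⊕ κ → G × H) := by
  have sum_eq (S : Finset (ι ⊕ κ)) :
      ∑ x ∈ S, Sum.elim (fun i ↦ (g i, 0)) (fun j ↦ (0, h j)) x =
        (∑ i ∈ S.toLeft, g i, ∑ j ∈ S.toRight, h j) := by
    rw [sum_sum_eq_sum_toLeft_add_sum_toRight]
    ext <;> simp [Prod.fst_sum, Prod.snd_sum]
  intro S T hST
  simp only [sum_eq, Prod.mk.injEq] at hST
  rw [← toLeft_disjSum_toRight (u := S), hg hST.1, hh hST.2, toLeft_disjSum_toRight]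

theorem two_pow_card_le [Fintype ι] [Finite G] (hg : IsDissociated g) :
    2 ^ Fintype.card ι ≤ Nat.card G := by
  simpa using Nat.card_le_card_of_injective _ hg

end IsDissociated

theorem isDissociated_pow {R : Type*} [Ring R] {N b k : ℕ} [CharP R N] (hb : 2 ≤ b)
    (hN : b ^ k ≤ N) : IsDissociated fun i : Fin k ↦ (b : R) ^ (i : ℕ) := by
  have sum_lt (S : Finset (Fin k)) : ∑ i ∈ S, b ^ (i : ℕ) < N := by
    calc ∑ i ∈ S, b ^ (i : ℕ) = ∑ i ∈ S.map Fin.valEmbedding, b ^ i := by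
          simp only [sum_map, Fin.valEmbedding_apply]
      _ < b ^ k := Nat.geomSum_lt hb (by simp)
      _ ≤ N := hN
  have isDissociated_nat : IsDissociated fun i : Fin k ↦ b ^ (i : ℕ) :=
    IsDissociated.comp_embedding (geomSum_injective hb) Fin.valEmbedding
  intro S T hST
  apply isDissociated_nat
  apply CharP.natCast_injOn_Iio R N (sum_lt S) (sum_lt T)
  simpa only [Nat.cast_sum, Nat.cast_pow] using hST

section Davpm

variable {G : Type*} [AddCommGroup G]

theorem hasWZS_pm_of_sum_eq {ℓ : ℕ} {g : Fin ℓ → G} {S T : Finset (Fin ℓ)} (hne : S ≠ T)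
    (hST : ∑ i ∈ S, g i = ∑ i ∈ T, g i) : HasWZS {1, -1} g := by
  refine ⟨symmDiff S T, fun i ↦ if i ∈ S then 1 else -1, symmDiff_nonempty.2 hne,
    fun i _ ↦ ?_, ?_⟩
  · by_cases hi : i ∈ S <;> simp [hi]
  · have sum_pos : ∑ i ∈ S \ T, (if i ∈ S then (1 : ℤ) else -1) • g i = ∑ i ∈ S \ T, g i :=
      sum_congr rfl fun i hi ↦ by simp [(mem_sdiff.1 hi).1]
    have sum_neg : ∑ i ∈ T \ S, (if i ∈ S then (1 : ℤ) else -1) • g i = -∑ i ∈ T \ S, g i := by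
      rw [← sum_neg_distrib]
      exact sum_congr rfl fun i hi ↦ by simp [(mem_sdiff.1 hi).2]
    rw [symmDiff, sup_eq_union, sum_union disjoint_sdiff_sdiff, sum_pos, sum_neg,
      ← sub_eq_add_neg, sum_sdiff_sub_sum_sdiff, hST, sub_self]

theorem IsDissociated.not_hasWZS_pm {ℓ : ℕ} {g : Fin ℓ → G} (hg : IsDissociated g) :
    ¬ HasWZS {1, -1} g := by
  rintro ⟨I, a, ⟨j, hj⟩, ha, hsum⟩
  have ha' : ∀ i ∈ I, a i = 1 ∨ a i = -1 := ha
  have sum_pos : ∑ i ∈ I with a i = 1, a i • g i = ∑ i ∈ I with a i = 1, g i :=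
    sum_congr rfl fun i hi ↦ by rw [(mem_filter.1 hi).2, one_smul]
  have sum_neg : ∑ i ∈ I with a i ≠ 1, a i • g i = -∑ i ∈ I with a i ≠ 1, g i := by
    rw [← sum_neg_distrib]
    refine sum_congr rfl fun i hi ↦ ?_
    obtain ⟨hiI, hi1⟩ := mem_filter.1 hi
    rw [(ha' i hiI).resolve_left hi1, neg_one_smul]
  rw [← sum_filter_add_sum_filter_not I (a · = 1), sum_pos, sum_neg, add_neg_eq_zero] at hsum
  have hmem := congrArg (j ∈ ·) (hg hsum)
  simp [hj] at hmem

theorem hasWZS_pm_iff_not_isDissociated {ℓ : ℕ} {g : Fin ℓ → G} :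
    HasWZS {1, -1} g ↔ ¬ IsDissociated g := by
  refine ⟨fun h hg ↦ hg.not_hasWZS_pm h, fun hg ↦ ?_⟩
  obtain ⟨S, T, hST, hne⟩ := not_injective_iff.1 hg
  exact hasWZS_pm_of_sum_eq hne hST

variable [Finite G]

theorem hasWZS_pm_of_card_lt_two_pow {ℓ : ℕ} (hℓ : Nat.card G < 2 ^ ℓ) (g : Fin ℓ → G) :
    HasWZS {1, -1} g :=
  hasWZS_pm_iff_not_isDissociated.2 fun hg ↦
    hℓ.not_ge (by simpa using hg.two_pow_card_le)

variable (G) in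
theorem davpm_le_natLog_card_add_one : Davpm G ≤ Nat.log 2 (Nat.card G) + 1 :=
  Nat.sInf_le <| hasWZS_pm_of_card_lt_two_pow <| Nat.lt_pow_succ_log_self one_lt_two _

theorem hasWZS_pm_of_davpm (g : Fin (Davpm G) → G) : HasWZS {1, -1} g :=
  Nat.sInf_mem (s := {ℓ | ∀ g : Fin ℓ → G, HasWZS {1, -1} g})
    ⟨_, hasWZS_pm_of_card_lt_two_pow <| Nat.lt_pow_succ_log_self one_lt_two _⟩ g

theorem IsDissociated.card_lt_davpm {ι : Type*} [Fintype ι] {g : ι → G} (hg : IsDissociated g) :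
    Fintype.card ι < Davpm G := by
  by_contra! hle
  obtain ⟨f⟩ : Nonempty (Fin (Davpm G) ↪ ι) :=
    Embedding.nonempty_of_card_le (by simpa using hle)
  exact hasWZS_pm_iff_not_isDissociated.1 (hasWZS_pm_of_davpm _) (hg.comp_embedding f)

end Davpm

theorem natLog_add_natLog_lt_davpm_zmod_prod {a b : ℕ} (ha : a ≠ 0) (hb : b ≠ 0) :
    Nat.log 2 a + Nat.log 2 b < Davpm (ZMod a × ZMod b) := by
  have : NeZero a := ⟨ha⟩
  have : NeZero b := ⟨hb⟩
  have hA := isDissociated_pow (R := ZMod a) le_rfl (Nat.pow_log_le_self 2 ha)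
  have hB := isDissociated_pow (R := ZMod b) le_rfl (Nat.pow_log_le_self 2 hb)
  simpa using (hA.prod hB).card_lt_davpm

theorem stmt17_general (k : ℕ) {m : ℕ} (hm : m ≠ 0) :
    (Davpm (ZMod (2 ^ k) × ZMod m) : ℤ) = ⌊Real.logb 2 (2 ^ k * (m : ℝ))⌋ + 1 := by
  have : NeZero m := ⟨hm⟩
  have hlog : Nat.log 2 (2 ^ k * m) = k + Nat.log 2 m := natLog_pow_mul one_lt_two hm k
  have hfloor : ⌊Real.logb 2 (2 ^ k * (m : ℝ))⌋ = (Nat.log 2 (2 ^ k * m) : ℤ) := by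
    exact_mod_cast Real.floor_logb_natCast (b := 2) (Nat.cast_nonneg (2 ^ k * m))
  have upper := davpm_le_natLog_card_add_one (ZMod (2 ^ k) × ZMod m)
  have lower := natLog_add_natLog_lt_davpm_zmod_prod (pow_ne_zero k two_ne_zero) hm
  rw [Nat.card_prod, Nat.card_zmod, Nat.card_zmod, hlog] at upper
  rw [Nat.log_pow one_lt_two] at lower
  rw [hfloor, hlog]
  exact_mod_cast upper.antisymm lower

theorem stmt17 (n : ℕ) (hn : 2 ≤ n) :
    (Davpm (ZMod 4 × ZMod (4 * n)) : ℤ) = ⌊Real.logb 2 (16 * (n : ℝ))⌋ + 1 := by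
  rw [show 16 * (n : ℝ) = 2 ^ 2 * ((4 * n : ℕ) : ℝ) by push_cast; ring]
  exact stmt17_general 2 (by lia)
end
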